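/- Let G be an infinite finitely generated group with finite generating set S. For every ε > 0 there exists a completely syndetic set A ⊆ G with d_{(G,S)}(A) < ε. -/

import Mathlib

/-!
The set is built as an increasing union `A = ⋃ Aₙ`, where `Aₙ` is `n`-syndetic with witness `Fₙ`
and `|Aₙ ∩ B_r| ≤ (ε / 2) (1 - 2⁻ⁿ) |B_r|` for *every* `r`; supersets of `n`-syndetic sets are
`n`-syndetic, so `A` is completely syndetic, and the uniform bounds pass to the union because each
ball is finite.

For the inductive step let `X` be a syndetic set, with `H x ∩ X ≠ ∅` for all `x`, and put
`Aₙ₊₁ = Aₙ ∪ Fₙ X`. Given `n + 1` points `s₀, …, sₙ`, first move `s₀` into `X` by some `h ∈ H`,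
and then move the other `n` points `h sᵢ` into `Aₙ` by some `f ∈ Fₙ`; since `f h s₀ ∈ Fₙ X`, all
points land in `Aₙ₊₁`, so `Fₙ H` is a witness of `(n + 1)`-syndeticity.

It remains to find, for a given finite set `F`, a syndetic `X` with `|F X ∩ B_r| ≤ δ |B_r|` for all
`r` (`exists_sparse_syndetic`). Here `X` is a maximal very separated subset of the complement of a
large ball. If `F ⊆ B_L`, the number of points in question is at most `|F| |X ∩ B_{r+L}|`. Each
`x ∈ X ∩ B_{r+L}` can be pushed `L + M` steps towards the identity, to a point `x'` with
`B_M x' ⊆ B_r`; these translates are disjoint by separation, so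
`|X ∩ B_{r+L}| |B_M| ≤ |B_r|`, and `|B_M|` can be taken as large as needed. Pushing towards the
identity is what makes the estimate work for groups of exponential growth, where
`|B_{r+L}| / |B_r|` does not tend to `1`.
-/

open Filter

/-- `A ⊆ G` is `n`-syndetic: there is a finite `F ⊆ G` such that every subset `S' ⊆ G`
with `|S'| ≤ n` satisfies `S' ⊆ f • A` for some `f ∈ F`. -/
def IsNSyndetic {G : Type*} [Group G] (A : Set G) (n : ℕ) : Prop :=
  ∃ F : Finset G, ∀ S' : Finset G, S'.card ≤ n → ∃ f ∈ F, (S' : Set G) ⊆ (f * ·) '' A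

/-- `A ⊆ G` is completely syndetic: `n`-syndetic for every `n ≥ 1`. -/
def IsCS {G : Type*} [Group G] (A : Set G) : Prop :=
  ∀ n : ℕ, 1 ≤ n → IsNSyndetic A n

/-- The closed ball of radius `r` about the identity in the word metric of `G` with respect to
the generating set `S`: elements expressible as a product of at most `r` elements of
`S ∪ S⁻¹`. -/
def wordBall {G : Type*} [Group G] (S : Finset G) (r : ℕ) : Set G :=
  {g : G | ∃ l : List G, (∀ x ∈ l, x ∈ S ∨ x⁻¹ ∈ S) ∧ l.length ≤ r ∧ l.prod = g}

/-- The density of `A ⊆ G` with respect to the finite generating set `S`: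
`limsup_{r → ∞} |A ∩ B_r| / |B_r|`. -/
noncomputable def wordDensity {G : Type*} [Group G] (S : Finset G) (A : Set G) : ℝ :=
  Filter.limsup
    (fun r : ℕ => ((A ∩ wordBall S r).ncard : ℝ) / ((wordBall S r).ncard : ℝ))
    Filter.atTop

section WordBall

variable {G : Type*} [Group G]

lemma one_mem_wordBall (S : Finset G) (r : ℕ) : (1 : G) ∈ wordBall S r :=
  ⟨[], by simp, by simp, by simp⟩

lemma wordBall_mono (S : Finset G) {r s : ℕ} (h : r ≤ s) : wordBall S r ⊆ wordBall S s := by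
  rintro g ⟨l, h1, h2, h3⟩
  exact ⟨l, h1, h2.trans h, h3⟩

lemma mul_mem_wordBall {S : Finset G} {r s : ℕ} {g h : G} (hg : g ∈ wordBall S r)
    (hh : h ∈ wordBall S s) : g * h ∈ wordBall S (r + s) := by
  obtain ⟨l, h1, h2, rfl⟩ := hg
  obtain ⟨m, k1, k2, rfl⟩ := hh
  refine ⟨l ++ m, ?_, ?_, by simp⟩
  · intro x hx
    rcases List.mem_append.1 hx with hx | hx
    exacts [h1 x hx, k1 x hx]
  · rw [List.length_append]
    omega

lemma inv_mem_wordBall {S : Finset G} {r : ℕ} {g : G} (hg : g ∈ wordBall S r) :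
    g⁻¹ ∈ wordBall S r := by
  obtain ⟨l, h1, h2, rfl⟩ := hg
  refine ⟨(l.map (·⁻¹)).reverse, ?_, by simpa using h2, (List.prod_inv_reverse l).symm⟩
  intro x hx
  simp only [List.mem_reverse, List.mem_map] at hx
  obtain ⟨y, hy, rfl⟩ := hx
  rw [inv_inv]
  exact (h1 y hy).symm

lemma finite_wordBall (S : Finset G) (r : ℕ) : (wordBall S r).Finite := by
  induction r with
  | zero =>
    refine (Set.finite_singleton (1 : G)).subset ?_
    rintro g ⟨l, -, h2, rfl⟩
    have : l = [] := List.length_eq_zero_iff.1 (by omega)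
    simp [this]
  | succ r ih =>
    have hT : ((S : Set G) ∪ (S : Set G)⁻¹).Finite := S.finite_toSet.union S.finite_toSet.inv
    refine ((Set.Finite.image2 (· * ·) hT ih).insert 1).subset ?_
    rintro g ⟨l, h1, h2, rfl⟩
    cases l with
    | nil => simp
    | cons a l =>
      refine Or.inr ⟨a, ?_, l.prod, ⟨l, fun x hx => h1 x (by simp [hx]), ?_, rfl⟩, by simp⟩
      · simpa using h1 a (by simp)
      · simpa using h2

lemma exists_finset_subset_wordBall {S : Finset G} (hS : Subgroup.closure (S : Set G) = ⊤)
    (F : Finset G) : ∃ r, (F : Set G) ⊆ wordBall S r := by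
  classical
  induction F using Finset.induction_on with
  | empty => exact ⟨0, by simp⟩
  | insert a F _ ih =>
    obtain ⟨r, hr⟩ := ih
    have ha : a ∈ Subgroup.closure (S : Set G) := by simp [hS]
    rw [← Subgroup.mem_toSubmonoid, Subgroup.closure_toSubmonoid] at ha
    obtain ⟨l, h1, h2⟩ := Submonoid.exists_list_of_mem_closure ha
    refine ⟨l.length + r, ?_⟩
    rw [Finset.coe_insert, Set.insert_subset_iff]
    exact ⟨wordBall_mono S (Nat.le_add_right _ _) ⟨l, by simpa using h1, le_rfl, h2⟩,
      hr.trans (wordBall_mono S (Nat.le_add_left _ _))⟩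

lemma exists_le_ncard_wordBall [Infinite G] {S : Finset G}
    (hS : Subgroup.closure (S : Set G) = ⊤) (N : ℕ) : ∃ r, N ≤ (wordBall S r).ncard := by
  obtain ⟨F, hF⟩ := Infinite.exists_superset_card_eq (∅ : Finset G) N (by simp)
  obtain ⟨r, hr⟩ := exists_finset_subset_wordBall hS F
  refine ⟨r, ?_⟩
  rw [← hF.2, ← Set.ncard_coe_finset]
  exact Set.ncard_le_ncard hr (finite_wordBall S r)

/-- An element of `B_m` can be moved `k` steps towards the identity, by left multiplication by an
element of `B_k`; if `k ≥ m` it can be moved to the identity, in agreement with `m - k = 0`. -/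
lemma exists_mul_mem_wordBall {S : Finset G} {m k : ℕ} {g : G} (hg : g ∈ wordBall S m) :
    ∃ u ∈ wordBall S k, u * g ∈ wordBall S (m - k) := by
  obtain ⟨l, h1, h2, rfl⟩ := hg
  refine ⟨(l.take k).prod⁻¹, inv_mem_wordBall
    ⟨l.take k, fun x hx => h1 x (List.mem_of_mem_take hx), by simp, rfl⟩,
    l.drop k, fun x hx => h1 x (List.mem_of_mem_drop hx), ?_, ?_⟩
  · rw [List.length_drop]
    omega
  · rw [eq_inv_mul_iff_mul_eq, List.prod_take_mul_prod_drop]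

end WordBall

section Construction

variable {G : Type*} [Group G]

/-- A maximal subset of the complement of `B_K` whose points are more than `D` apart: its points
cannot be joined by left multiplication by elements of `B_D`, and it is syndetic. -/
lemma exists_separated_net [Infinite G] (S : Finset G) (K D : ℕ) :
    ∃ (X : Set G) (H : Finset G), (∀ g, ∃ h ∈ H, h * g ∈ X) ∧ (∀ x ∈ X, x ∉ wordBall S K) ∧
      ∀ x ∈ X, ∀ y ∈ X, x * y⁻¹ ∈ wordBall S D → x = y := by
  classical
  obtain ⟨X, hX⟩ := zorn_subset
    {X : Set G | X ⊆ (wordBall S K)ᶜ ∧ X.Pairwise fun x y => x * y⁻¹ ∉ wordBall S D} (by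
      intro c hc hchain
      refine ⟨⋃₀ c, ⟨Set.sUnion_subset fun s hs => (hc hs).1, ?_⟩,
        fun s hs => Set.subset_sUnion_of_mem hs⟩
      exact (Set.pairwise_sUnion hchain.directedOn).2 fun s hs => (hc hs).2)
  -- By maximality, points outside `B_K` are within distance `D` of `X`.
  have hnear : ∀ g, g ∉ wordBall S K → ∃ h ∈ wordBall S D, h * g ∈ X := by
    intro g hg
    by_contra! hcon
    have hmem : insert g X ∈ {X : Set G | X ⊆ (wordBall S K)ᶜ ∧
        X.Pairwise fun x y => x * y⁻¹ ∉ wordBall S D} := by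
      refine ⟨Set.insert_subset hg hX.prop.1, hX.prop.2.insert fun y hy _ => ⟨?_, ?_⟩⟩
      · intro h
        have := hcon _ (inv_mem_wordBall h)
        apply this
        simpa using hy
      · intro h
        apply hcon _ h
        simpa using hy
    have hgX : g ∈ X := hX.le_of_ge hmem (Set.subset_insert g X) (Set.mem_insert g X)
    exact hcon 1 (one_mem_wordBall S D) (by simpa using hgX)
  -- Left multiplication by `t` moves `B_K` off itself.
  obtain ⟨t, ht⟩ := (finite_wordBall S (K + K)).exists_notMem
  set E := (finite_wordBall S D).toFinset with hE
  refine ⟨X, E ∪ E.image (· * t), ?_, fun x hx => hX.prop.1 hx, ?_⟩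
  · intro g
    by_cases hg : g ∈ wordBall S K
    · have htg : t * g ∉ wordBall S K := by
        intro h
        apply ht
        simpa using mul_mem_wordBall h (inv_mem_wordBall hg)
      obtain ⟨h, hh, hx⟩ := hnear _ htg
      refine ⟨h * t, Finset.mem_union_right _ (Finset.mem_image_of_mem _ (by simpa [hE] using hh)),
        by rwa [mul_assoc]⟩
    · obtain ⟨h, hh, hx⟩ := hnear _ hg
      exact ⟨h, Finset.mem_union_left _ (by simpa [hE] using hh), hx⟩
  · intro x hx y hy hxy
    by_contra hne
    exact hX.prop.2 hx hy hne hxy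

lemma exists_sparse_syndetic [Infinite G] {S : Finset G}
    (hS : Subgroup.closure (S : Set G) = ⊤) (F : Finset G) {δ : ℝ} (hδ : 0 < δ) :
    ∃ (X : Set G) (H : Finset G), (∀ g, ∃ h ∈ H, h * g ∈ X) ∧
      ∀ r, ((Set.image2 (· * ·) (F : Set G) X ∩ wordBall S r).ncard : ℝ) ≤
        δ * (wordBall S r).ncard := by
  classical
  obtain ⟨L, hL⟩ := exists_finset_subset_wordBall hS F
  obtain ⟨N, hN⟩ := exists_nat_ge ((F.card : ℝ) / δ)
  obtain ⟨M, hM⟩ := exists_le_ncard_wordBall hS N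
  obtain ⟨X, H, hH, hXK, hXD⟩ :=
    exists_separated_net S (L + M) ((M + (L + M)) + (M + (L + M)))
  refine ⟨X, H, hH, fun r => ?_⟩
  have hYfin : (X ∩ wordBall S (r + L)).Finite := (finite_wordBall S _).inter_of_right _
  have hcount : (Set.image2 (· * ·) (F : Set G) X ∩ wordBall S r).ncard ≤
      F.card * (X ∩ wordBall S (r + L)).ncard := by
    have hsub : Set.image2 (· * ·) (F : Set G) X ∩ wordBall S r ⊆
        (fun p : G × G => p.1 * p.2) '' ((F : Set G) ×ˢ (X ∩ wordBall S (r + L))) := by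
      rintro _ ⟨⟨f, hf, x, hx, rfl⟩, hr⟩
      refine ⟨(f, x), ⟨hf, hx, ?_⟩, rfl⟩
      rw [add_comm]
      simpa using mul_mem_wordBall (inv_mem_wordBall (hL hf)) hr
    have hfin := F.finite_toSet.prod hYfin
    refine (Set.ncard_le_ncard hsub (hfin.image _)).trans ((Set.ncard_image_le hfin).trans ?_)
    rw [Set.ncard_prod, Set.ncard_coe_finset]
  have hpack : (X ∩ wordBall S (r + L)).ncard * (wordBall S M).ncard ≤ (wordBall S r).ncard := by
    have hex : ∀ x : G, ∃ u ∈ wordBall S (L + M), x ∈ wordBall S (r + L) →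
        u * x ∈ wordBall S (r + L - (L + M)) := by
      intro x
      by_cases hx : x ∈ wordBall S (r + L)
      · obtain ⟨u, hu, h⟩ := exists_mul_mem_wordBall (k := L + M) hx
        exact ⟨u, hu, fun _ => h⟩
      · exact ⟨1, one_mem_wordBall _ _, fun h => absurd h hx⟩
    choose u hu hux using hex
    rw [← Set.ncard_prod]
    refine Set.ncard_le_ncard_of_injOn (fun p => p.2 * (u p.1 * p.1)) ?_ ?_ (finite_wordBall S r)
    · rintro ⟨x, b⟩ ⟨⟨hxX, hx⟩, hb⟩
      -- Points of `X` lie outside `B_{L+M}`, so the truncated subtraction below is genuine.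
      have hMr : M ≤ r := by
        by_contra! hlt
        exact hXK x hxX (wordBall_mono S (by omega) hx)
      exact wordBall_mono S (by omega) (mul_mem_wordBall hb (hux x hx))
    · rintro ⟨x, b⟩ ⟨⟨hxX, hx⟩, hb⟩ ⟨y, c⟩ ⟨⟨hyX, hy⟩, hc⟩ heq
      simp only at heq hb hc hxX hyX
      have hxy : x * y⁻¹ = (b * u x)⁻¹ * (c * u y) := by
        rw [eq_inv_mul_iff_mul_eq, ← mul_assoc, mul_inv_eq_iff_eq_mul, mul_assoc, heq, mul_assoc]
      have : x = y := hXD x hxX y hyX (by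
        rw [hxy]
        exact mul_mem_wordBall (inv_mem_wordBall (mul_mem_wordBall hb (hu x)))
          (mul_mem_wordBall hc (hu y)))
      subst this
      rw [mul_right_cancel heq]
  have hFN : (F.card : ℝ) ≤ δ * (wordBall S M).ncard := by
    rw [div_le_iff₀' hδ] at hN
    have : (N : ℝ) ≤ (wordBall S M).ncard := by exact_mod_cast hM
    nlinarith
  calc ((Set.image2 (· * ·) (F : Set G) X ∩ wordBall S r).ncard : ℝ)
      ≤ F.card * (X ∩ wordBall S (r + L)).ncard := by exact_mod_cast hcount
    _ ≤ (δ * (wordBall S M).ncard) * (X ∩ wordBall S (r + L)).ncard := by gcongr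
    _ = δ * (((X ∩ wordBall S (r + L)).ncard * (wordBall S M).ncard : ℕ) : ℝ) := by
        push_cast
        ring
    _ ≤ δ * (wordBall S r).ncard := by gcongr

/-- The stages of the construction: `F` moves any `n` points simultaneously into `A`, and `A` takes
up at most the proportion `c (1 - 2⁻ⁿ)` of every ball. -/
def IsStage (S : Finset G) (c : ℝ) (n : ℕ) (p : Set G × Finset G) : Prop :=
  (∀ T : Finset G, T.card ≤ n → ∃ f ∈ p.2, ∀ s ∈ T, f * s ∈ p.1) ∧
    ∀ r, ((p.1 ∩ wordBall S r).ncard : ℝ) ≤ c * (1 - (1 / 2) ^ n) * (wordBall S r).ncard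

lemma IsStage.exists_succ [Infinite G] {S : Finset G} (hS : Subgroup.closure (S : Set G) = ⊤)
    {c : ℝ} (hc : 0 < c) {n : ℕ} {p : Set G × Finset G} (hp : IsStage S c n p) :
    ∃ q, IsStage S c (n + 1) q ∧ p.1 ⊆ q.1 := by
  classical
  obtain ⟨A, F⟩ := p
  obtain ⟨hF, hA⟩ := hp
  obtain ⟨X, H, hH, hX⟩ := exists_sparse_syndetic hS F (δ := c * (1 / 2) ^ (n + 1)) (by positivity)
  refine ⟨(A ∪ Set.image2 (· * ·) (F : Set G) X, Finset.image₂ (· * ·) F H), ⟨?_, fun r => ?_⟩,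
    Set.subset_union_left⟩
  · intro T hT
    obtain ⟨s₀, U, hU, hTU⟩ : ∃ s₀, ∃ U : Finset G, U.card ≤ n ∧ T ⊆ insert s₀ U := by
      rcases T.eq_empty_or_nonempty with rfl | ⟨s₀, hs₀⟩
      · exact ⟨1, ∅, by simp, by simp⟩
      · refine ⟨s₀, T.erase s₀, ?_, (Finset.insert_erase hs₀).ge⟩
        rw [Finset.card_erase_of_mem hs₀]
        omega
    obtain ⟨h, hh, hhX⟩ := hH s₀
    obtain ⟨f, hf, hfA⟩ := hF (U.image (h * ·)) (Finset.card_image_le.trans hU)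
    refine ⟨f * h, Finset.mem_image₂_of_mem hf hh, fun s hs => ?_⟩
    rw [mul_assoc]
    rcases Finset.mem_insert.1 (hTU hs) with rfl | hs
    · exact Or.inr ⟨f, hf, _, hhX, rfl⟩
    · exact Or.inl (hfA _ (Finset.mem_image_of_mem _ hs))
  · have h1 : (((A ∪ Set.image2 (· * ·) (F : Set G) X) ∩ wordBall S r).ncard : ℝ) ≤
        (A ∩ wordBall S r).ncard +
          (Set.image2 (· * ·) (F : Set G) X ∩ wordBall S r).ncard := by
      rw [Set.union_inter_distrib_right]
      exact_mod_cast Set.ncard_union_le _ _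
    refine (h1.trans (add_le_add (hA r) (hX r))).trans (le_of_eq ?_)
    ring

end Construction


/-- Let `G` be an infinite group generated by the finite set `S`. For every `ε > 0` there is a
completely syndetic subset `A ⊆ G` with `d_{(G,S)}(A) < ε`. -/
theorem exists_cs_of_small_density {G : Type*} [Group G] [Infinite G]
    (S : Finset G) (hS : Subgroup.closure (S : Set G) = ⊤) (ε : ℝ) (hε : 0 < ε) :
    ∃ A : Set G, IsCS A ∧ wordDensity S A < ε := by
  classical
  have h0 : IsStage S (ε / 2) 0 (∅, {1}) := by
    refine ⟨fun T hT => ⟨1, by simp, ?_⟩, by simp⟩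
    rw [Finset.card_eq_zero.1 (Nat.le_zero.1 hT)]
    simp
  choose next hnext hsub using fun (n : ℕ) (p : {p // IsStage S (ε / 2) n p}) =>
    p.2.exists_succ hS (half_pos hε)
  let a : ∀ n, {p // IsStage S (ε / 2) n p} :=
    fun n => Nat.rec ⟨_, h0⟩ (fun n p => ⟨next n p, hnext n p⟩) n
  have hmono : Monotone fun n => (a n).1.1 := monotone_nat_of_le_succ fun n => hsub n (a n)
  refine ⟨⋃ n, (a n).1.1, fun n _ => ?_, ?_⟩
  · refine ⟨(a n).1.2.image (·⁻¹), fun T hT => ?_⟩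
    obtain ⟨f, hf, hfT⟩ := (a n).2.1 T hT
    exact ⟨f⁻¹, Finset.mem_image_of_mem _ hf, fun s hs =>
      ⟨f * s, Set.mem_iUnion.2 ⟨n, hfT s hs⟩, by simp⟩⟩
  · refine lt_of_le_of_lt ?_ (half_lt_self hε)
    refine limsup_le_of_le ?_ (Eventually.of_forall fun r => ?_)
    · exact isCoboundedUnder_le_of_le atTop (x := 0) fun r => by positivity
    -- The ball is finite, so it meets the union in the same points as a single stage.
    obtain ⟨N, hN⟩ : ∃ N, (⋃ n, (a n).1.1) ∩ wordBall S r ⊆ (a N).1.1 := by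
      have hfin := (finite_wordBall S r).inter_of_right (⋃ n, (a n).1.1)
      obtain ⟨N, hN⟩ := hmono.directed_le.exists_mem_subset_of_finset_subset_biUnion
        (s := hfin.toFinset) (by simp)
      exact ⟨N, by simpa using hN⟩
    refine div_le_of_le_mul₀ (by positivity) (half_pos hε).le ?_
    calc (((⋃ n, (a n).1.1) ∩ wordBall S r).ncard : ℝ)
        ≤ ((a N).1.1 ∩ wordBall S r).ncard := by
          exact_mod_cast Set.ncard_le_ncard (Set.subset_inter hN Set.inter_subset_right)
            ((finite_wordBall S r).inter_of_right _)
      _ ≤ ε / 2 * (1 - (1 / 2) ^ N) * (wordBall S r).ncard := (a N).2.2 r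
      _ ≤ ε / 2 * (wordBall S r).ncard := by
          gcongr
          refine mul_le_of_le_one_right (half_pos hε).le ?_
          linarith [pow_pos (one_half_pos (α := ℝ)) N]
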